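/- Let Z : Ω → ℝ^{d_z} be a measurable random variable on a probability space (Ω, P), let D_x be a set, let α ∈ (0,1), let T be a positive natural number, and let f : D_x × ℝ^{d_z} → ℝ and, for each t ∈ {1,…,T}, functions l_{t−1}, u_{t−1} : D_x × ℝ^{d_z} → ℝ be such that all of the maps z ↦ f(x,z), z ↦ l_{t−1}(x,z), z ↦ u_{t−1}(x,z) are Borel measurable for every x ∈ D_x, and l_{t−1}(x,z) ≤ f(x,z) ≤ u_{t−1}(x,z) for all t, x, z. For each t ∈ {1,…,T} let x_t ∈ D_x satisfy VaR_α(u_{t−1}(x, Z)) ≤ VaR_α(u_{t−1}(x_t, Z)) for all x ∈ D_x, and let z_t ∈ ℝ^{d_z} be a lacing value with respect to x_t at time t, i.e., l_{t−1}(x_t, z_t) ≤ VaR_α(l_{t−1}(x_t, Z)) and VaR_α(u_{t−1}(x_t, Z)) ≤ u_{t−1}(x_t, z_t). Let t* ∈ {1,…,T} satisfy VaR_α(l_{t−1}(x_t, Z)) ≤ VaR_α(l_{t*−1}(x_{t*}, Z)) for all t ∈ {1,…,T}, and let x* ∈ D_x be arbitrary. Then the regret of the recommendation x_{t*} satisfies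 VaR_α(f(x*, Z)) − VaR_α(f(x_{t*}, Z)) ≤ (1/T)·∑_{t=1}^{T} ( u_{t−1}(x_t, z_t) − l_{t−1}(x_t, z_t) ). -/

import Mathlib

open MeasureTheory Set Finset

/-- Value-at-risk of a real random variable `X` at level `α`. -/
noncomputable def VaR {Ω : Type*} [MeasurableSpace Ω] (P : Measure Ω)
    (X : Ω → ℝ) (α : ℝ) : ℝ :=
  sInf {w : ℝ | ENNReal.ofReal α ≤ P {ω | X ω ≤ w}}

theorem VaR_mono_aux {Ω : Type*} [MeasurableSpace Ω] (P : Measure Ω)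
    [IsProbabilityMeasure P] (X Y : Ω → ℝ) (hX : Measurable X) (hY : Measurable Y)
    (α : ℝ) (hα : α ∈ Set.Ioo (0 : ℝ) 1) (h : ∀ ω, X ω ≤ Y ω) :
    VaR P X α ≤ VaR P Y α := by
  have key : ∀ W : Ω → ℝ, Measurable W → ∀ w : ℝ,
      ProbabilityTheory.cdf (P.map W) w = (P {ω | W ω ≤ w}).toReal := by
    intro W hW w
    haveI := Measure.isProbabilityMeasure_map (μ := P) hW.aemeasurable
    rw [ProbabilityTheory.cdf_eq_real, Measure.real, Measure.map_apply hW measurableSet_Iic]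
    rfl
  unfold VaR
  apply csInf_le_csInf
  · obtain ⟨b, hb⟩ := ((ProbabilityTheory.tendsto_cdf_atBot (P.map X)).eventually
      (gt_mem_nhds hα.1)).exists
    rw [key X hX] at hb
    refine ⟨b, fun w hw => ?_⟩
    by_contra hlt
    push Not at hlt
    have h1 : P {ω | X ω ≤ w} ≤ P {ω | X ω ≤ b} :=
      measure_mono fun ω (hω : X ω ≤ w) => hω.trans hlt.le
    have h2 := (ENNReal.ofReal_le_iff_le_toReal (measure_ne_top P _)).1 (le_trans hw h1)
    linarith
  · obtain ⟨b, hb⟩ := ((ProbabilityTheory.tendsto_cdf_atTop (P.map Y)).eventually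
      (lt_mem_nhds hα.2)).exists
    rw [key Y hY] at hb
    exact ⟨b, (ENNReal.ofReal_le_iff_le_toReal (measure_ne_top P _)).2 hb.le⟩
  · intro w hw
    exact le_trans hw (measure_mono fun ω (hω : Y ω ≤ w) => (h ω).trans hω)

theorem stmt11 {Ω : Type*} [MeasurableSpace Ω] (P : Measure Ω)
    [IsProbabilityMeasure P] {dz : ℕ} (Z : Ω → (Fin dz → ℝ)) (hZ : Measurable Z)
    {Dx : Type*} (α : ℝ) (hα : α ∈ Set.Ioo (0 : ℝ) 1)
    (T : ℕ) (hT : 0 < T)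
    (f : Dx → (Fin dz → ℝ) → ℝ)
    (l u : ℕ → Dx → (Fin dz → ℝ) → ℝ)
    (hf : ∀ x : Dx, Measurable (f x))
    (hl : ∀ t ∈ Finset.Icc 1 T, ∀ x : Dx, Measurable (l t x))
    (hu : ∀ t ∈ Finset.Icc 1 T, ∀ x : Dx, Measurable (u t x))
    (hlf : ∀ t ∈ Finset.Icc 1 T, ∀ (x : Dx) (z : Fin dz → ℝ), l t x z ≤ f x z)
    (hfu : ∀ t ∈ Finset.Icc 1 T, ∀ (x : Dx) (z : Fin dz → ℝ), f x z ≤ u t x z)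
    (x : ℕ → Dx) (z : ℕ → (Fin dz → ℝ))
    (hx : ∀ t ∈ Finset.Icc 1 T, ∀ x' : Dx,
      VaR P (fun ω => u t x' (Z ω)) α ≤ VaR P (fun ω => u t (x t) (Z ω)) α)
    (hz_l : ∀ t ∈ Finset.Icc 1 T,
      l t (x t) (z t) ≤ VaR P (fun ω => l t (x t) (Z ω)) α)
    (hz_u : ∀ t ∈ Finset.Icc 1 T,
      VaR P (fun ω => u t (x t) (Z ω)) α ≤ u t (x t) (z t))
    (tstar : ℕ) (htstar : tstar ∈ Finset.Icc 1 T)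
    (htstar_max : ∀ t ∈ Finset.Icc 1 T,
      VaR P (fun ω => l t (x t) (Z ω)) α ≤ VaR P (fun ω => l tstar (x tstar) (Z ω)) α)
    (xstar : Dx) :
    VaR P (fun ω => f xstar (Z ω)) α - VaR P (fun ω => f (x tstar) (Z ω)) α ≤
      (1 / (T : ℝ)) * ∑ t ∈ Finset.Icc 1 T, (u t (x t) (z t) - l t (x t) (z t)) := by
  have hT' : (0 : ℝ) < T := by exact_mod_cast hT
  have h3 := VaR_mono_aux P (fun ω => l tstar (x tstar) (Z ω)) (fun ω => f (x tstar) (Z ω))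
    ((hl tstar htstar _).comp hZ) ((hf _).comp hZ) α hα (fun ω => hlf tstar htstar _ _)
  have hterm : ∀ t ∈ Finset.Icc 1 T,
      VaR P (fun ω => f xstar (Z ω)) α - VaR P (fun ω => f (x tstar) (Z ω)) α
        ≤ u t (x t) (z t) - l t (x t) (z t) := by
    intro t ht
    have h1 := VaR_mono_aux P (fun ω => f xstar (Z ω)) (fun ω => u t xstar (Z ω))
      ((hf _).comp hZ) ((hu t ht _).comp hZ) α hα (fun ω => hfu t ht _ _)
    have h2 := hx t ht xstar
    have h4 := htstar_max t ht
    have h5 := hz_l t ht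
    have h6 := hz_u t ht
    linarith
  have hs := Finset.card_nsmul_le_sum _ _ _ hterm
  rw [Nat.card_Icc, Nat.add_sub_cancel, nsmul_eq_mul] at hs
  rw [one_div, ← div_eq_inv_mul, le_div_iff₀ hT', mul_comm]
  exact hs
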